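/- Let V be a finite-dimensional complex inner product space and A a finite set of linear subspaces of V. Suppose G ⊆ L(A)* \ {0} is a combinatorial building set of the poset L(A)* (ordered by inclusion), and suppose that for every U ∈ L(A)*, the sum of the dimensions of the factors of U (the maximal elements of G contained in U) equals the dimension of U. Then G is a geometric building set for A. -/

import Mathlib

attribute [local instance] Classical.propDecidable

universe u

/-- The set of maximal elements of `G` below `x`. -/
def maxBelow {L : Type u} [PartialOrder L] (G : Set L) (x : L) : Set L :=
  {g | g ∈ G ∧ g ≤ x ∧ ∀ h ∈ G, h ≤ x → g ≤ h → h = g}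

/-- The tuple in the product of lower intervals which is `g` in the coordinate
indexed by `g` and bottom elsewhere. -/
noncomputable def deltaTuple {L : Type u} [PartialOrder L] [OrderBot L] (G : Set L) (x : L)
    (g : maxBelow G x) : (h : maxBelow G x) → Set.Iic (h : L) :=
  fun h => if (h : L) = (g : L) then ⟨(h : L), le_refl _⟩ else ⟨⊥, bot_le⟩

/-- `G` is a (combinatorial) building set: `G` avoids the bottom element, and for every
`x ≠ ⊥` the interval `[⊥, x]` decomposes as the product of the intervals below the maximal
elements of `G` below `x`, via an isomorphism sending delta tuples to the corresponding
maximal elements. -/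
def IsBuilding {L : Type u} [PartialOrder L] [OrderBot L] (G : Set L) : Prop :=
  (∀ g ∈ G, g ≠ ⊥) ∧
  ∀ x : L, x ≠ ⊥ →
    ∃ φ : ((h : maxBelow G x) → Set.Iic (h : L)) ≃o Set.Iic x,
      ∀ g : maxBelow G x, ((φ (deltaTuple G x g) : Set.Iic x) : L) = (g : L)

noncomputable section

open Module

variable {V : Type} [NormedAddCommGroup V] [InnerProductSpace ℂ V] [FiniteDimensional ℂ V]

/-- `L(A)*`: the orthogonal complements of the intersections of subfamilies of `A`,
as a set of submodules (ordered by inclusion). -/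
def Lstar (A : Finset (Submodule ℂ V)) : Set (Submodule ℂ V) :=
  {W | ∃ S : Finset (Submodule ℂ V), S ⊆ A ∧ W = (S.inf id)ᗮ}

instance LstarOrderBot (A : Finset (Submodule ℂ V)) : OrderBot ↥(Lstar A) where
  bot := ⟨⊥, ∅, by simp, by simp⟩
  bot_le := fun w => show (⊥ : Submodule ℂ V) ≤ (w : Submodule ℂ V) from bot_le

/-- `D` is a decomposition of `U` in the sense of De Concini–Procesi: `D ⊆ L(A)*`,
`U` is the internal direct sum of `D`, and every `W ∈ L(A)*` with `W ≤ U` is the internal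
direct sum of the intersections `d ⊓ W`, each of which again lies in `L(A)*`. -/
def IsDecompositionOf (A : Finset (Submodule ℂ V)) (D : Set (Submodule ℂ V))
    (U : Submodule ℂ V) : Prop :=
  D ⊆ Lstar A ∧ sSupIndep D ∧ sSup D = U ∧
  ∀ W ∈ Lstar A, W ≤ U →
    (∀ d ∈ D, d ⊓ W ∈ Lstar A) ∧
    iSupIndep (fun d : D => (d : Submodule ℂ V) ⊓ W) ∧
    (⨆ d : D, (d : Submodule ℂ V) ⊓ W) = W


lemma iSup_mem_Lstar (A : Finset (Submodule ℂ V)) {ι : Type} (w : ι → Lstar A) :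
    (⨆ i, (w i : Submodule ℂ V)) ∈ Lstar A := by
  choose S hS hw using fun i => (w i).2
  refine ⟨A.filter (fun a => ∃ i, a ∈ S i), Finset.filter_subset _ _, ?_⟩
  rw [← Submodule.orthogonal_orthogonal (⨆ i, (w i : Submodule ℂ V)), ← Submodule.iInf_orthogonal]
  congr 1
  simp only [hw, Submodule.orthogonal_orthogonal]
  apply le_antisymm
  · refine Finset.le_inf fun a ha => ?_
    obtain ⟨i, hi⟩ := (Finset.mem_filter.1 ha).2
    exact (iInf_le _ i).trans (Finset.inf_le (f := id) hi)
  · refine le_iInf fun i => Finset.le_inf fun a ha => ?_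
    exact Finset.inf_le (f := id) (Finset.mem_filter.2 ⟨hS i ha, i, ha⟩)

lemma Lstar_finite (A : Finset (Submodule ℂ V)) : (Lstar A).Finite := by
  refine ((A.powerset.image fun S : Finset (Submodule ℂ V) => ((S.inf id)ᗮ : Submodule ℂ V)).finite_toSet).subset ?_
  rintro W ⟨S, hS, rfl⟩
  simp only [Finset.coe_image, Set.mem_image, Finset.mem_coe, Finset.mem_powerset]
  exact ⟨S, hS, rfl⟩

lemma exists_parts (A : Finset (Submodule ℂ V)) (G : Set ↥(Lstar A)) (hG : IsBuilding G)
    (U W : Lstar A) (hW : W ≤ U) :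
    ∃ w : maxBelow G U → Lstar A, (∀ h, w h ≤ h.1) ∧
      (⨆ h, (w h : Submodule ℂ V)) = W := by
  by_cases hU : U = ⊥
  · subst hU
    have hWb : W = ⊥ := le_bot_iff.1 hW
    subst hWb
    exact ⟨fun _ => ⊥, fun h => bot_le, le_bot_iff.1 (iSup_le fun _ => le_rfl)⟩
  obtain ⟨φ, hφ⟩ := hG.2 U hU
  let t := φ.symm ⟨W, hW⟩
  have ht : φ t = ⟨W, hW⟩ := φ.apply_symm_apply _
  let e : maxBelow G U → ((h : maxBelow G U) → Set.Iic (h : Lstar A)) :=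
    fun g h => if h = g then t h else ⟨⊥, (bot_le : (⊥ : Lstar A) ≤ h.1)⟩
  have he : ∀ g, e g ≤ t := by
    intro g h
    simp only [e]
    split_ifs
    · exact le_rfl
    · exact (bot_le : (⊥ : Lstar A) ≤ (t h).1)
  have hed : ∀ g, e g ≤ deltaTuple G U g := by
    intro g h
    simp only [e, deltaTuple]
    by_cases hh : h = g
    · subst hh
      simp only [if_true]
      exact (t h).2
    · have : (h : Lstar A) ≠ g := fun h' => hh (Subtype.ext h')
      simp [hh, this]
  refine ⟨fun g => (φ (e g)).1, fun g => ?_, ?_⟩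
  · have := φ.monotone (hed g)
    rw [← hφ g]
    exact this
  · apply le_antisymm
    · refine iSup_le fun g => ?_
      have := φ.monotone (he g)
      rw [ht] at this
      exact this
    · let X : Lstar A := ⟨_, iSup_mem_Lstar A (fun g => (φ (e g)).1)⟩
      have hX : X ≤ U := by
        show (⨆ g, ((φ (e g)).1 : Submodule ℂ V)) ≤ U.1
        exact iSup_le fun g => (φ (e g)).2
      have key : t ≤ φ.symm ⟨X, hX⟩ := by
        intro g
        have h1 : φ (e g) ≤ ⟨X, hX⟩ :=
          (le_iSup (fun g => ((φ (e g)).1 : Submodule ℂ V)) g)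
        have h2 : e g ≤ φ.symm ⟨X, hX⟩ := (φ.le_symm_apply).2 h1
        have h3 := h2 g
        simpa [e] using h3
      have h4 := (φ.le_symm_apply).1 key
      rw [ht] at h4
      exact h4

lemma iSupIndep_of_finrank {ι : Type} [Fintype ι] (p : ι → Submodule ℂ V)
    (h : finrank ℂ (⨆ i, p i : Submodule ℂ V) = ∑ i, finrank ℂ (p i)) : iSupIndep p := by
  apply iSupIndep_of_dfinsupp_lsum_injective
  set f := (DFinsupp.lsum ℕ (M := fun i => p i) fun i => (p i).subtype) with hf
  have hr : LinearMap.range f = ⨆ i, p i := (Submodule.iSup_eq_range_dfinsupp_lsum p).symm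
  have h1 := LinearMap.finrank_range_add_finrank_ker f
  have h2 : finrank ℂ (Π₀ i, p i) = ∑ i, finrank ℂ (p i) := by
    rw [(DFinsupp.linearEquivFunOnFintype (R := ℂ) (M := fun i => p i)).finrank_eq]
    exact finrank_pi_fintype ℂ
  rw [hr, h, h2] at h1
  have h3 : finrank ℂ (LinearMap.ker f) = 0 := by omega
  exact LinearMap.ker_eq_bot.1 (Submodule.finrank_eq_zero.1 h3)

/-- a combinatorial building set of `L(A)*` whose factors' dimensions add up
correctly is a geometric building set for the arrangement. -/
theorem combinatorial_building_is_geometric (A : Finset (Submodule ℂ V))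
    (G : Set ↥(Lstar A)) (hG : IsBuilding G)
    (hdim : ∀ U : ↥(Lstar A), ∀ s : Finset ↥(Lstar A), ↑s = maxBelow G U →
      finrank ℂ (U : Submodule ℂ V) = ∑ g ∈ s, finrank ℂ ((g : Submodule ℂ V))) :
    ∀ U : ↥(Lstar A), IsDecompositionOf A (Subtype.val '' maxBelow G U) U.val := by
  intro U
  have : Finite (Lstar A) := Lstar_finite A
  have : Fintype (maxBelow G U) := Fintype.ofFinite _
  have hsup : (⨆ h : maxBelow G U, (h.1 : Submodule ℂ V)) = U.1 := by
    obtain ⟨w, hw, hs⟩ := exists_parts A G hG U U le_rfl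
    apply le_antisymm
    · exact iSup_le fun h => h.2.2.1
    · rw [← hs]
      exact iSup_mono hw
  have hind : iSupIndep (fun h : maxBelow G U => (h.1 : Submodule ℂ V)) := by
    apply iSupIndep_of_finrank
    rw [hsup, hdim U (maxBelow G U).toFinset (by simp)]
    exact (Finset.sum_subtype _ (by simp) _)
  have hindD : sSupIndep (Subtype.val '' maxBelow G U) := by
    have := hind.sSupIndep_range
    convert this using 1
    ext x
    simp
  have hsupD : sSup (Subtype.val '' maxBelow G U) = U.1 := by
    rw [sSup_image', ← hsup]
  refine ⟨?_, hindD, hsupD, ?_⟩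
  · rintro _ ⟨g, _, rfl⟩
    exact g.2
  intro W hW hWU
  obtain ⟨w, hw, hs⟩ := exists_parts A G hG U ⟨W, hW⟩ hWU
  simp only at hs
  have hwW : ∀ h, (w h : Submodule ℂ V) ≤ W := fun h => by
    rw [← hs]
    exact le_iSup (fun h => (w h : Submodule ℂ V)) h
  have heq : ∀ h : maxBelow G U, (h.1 : Submodule ℂ V) ⊓ W = w h := by
    intro h
    apply le_antisymm _ (le_inf (hw h) (hwW h))
    have h1 : W ≤ (w h : Submodule ℂ V) ⊔ ⨆ (j) (_ : j ≠ h), (j.1 : Submodule ℂ V) := by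
      conv_lhs => rw [← hs]
      refine iSup_le fun j => ?_
      by_cases hj : j = h
      · subst hj
        exact le_sup_left
      · exact le_sup_of_le_right (le_iSup₂_of_le j hj (hw j))
    calc (h.1 : Submodule ℂ V) ⊓ W
        ≤ ((w h : Submodule ℂ V) ⊔ ⨆ (j) (_ : j ≠ h), (j.1 : Submodule ℂ V)) ⊓ h.1 := by
          rw [inf_comm]
          exact inf_le_inf_right _ h1
      _ = (w h : Submodule ℂ V) ⊔ (⨆ (j) (_ : j ≠ h), (j.1 : Submodule ℂ V)) ⊓ h.1 :=
          sup_inf_assoc_of_le _ (hw h)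
      _ = w h := by
          rw [(hind h).symm.eq_bot, sup_bot_eq]
  refine ⟨?_, ?_, ?_⟩
  · rintro _ ⟨g, hg, rfl⟩
    rw [heq ⟨g, hg⟩]
    exact (w _).2
  · exact ((sSupIndep_iff _).1 hindD).mono fun d => inf_le_left
  · apply le_antisymm (iSup_le fun d => inf_le_right)
    conv_lhs => rw [← hs]
    refine iSup_le fun h => ?_
    rw [← heq h]
    exact le_iSup (fun d : (Subtype.val '' maxBelow G U) => (d : Submodule ℂ V) ⊓ W)
      ⟨h.1.1, h.1, h.2, rfl⟩


end
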